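/- Let N ≥ 1 and Q0 ≥ 1 be real numbers, and for q1 ∈ ℤ[i]\{0}, r1 ∈ ℤ[i], j ∈ ℤ[i] set S(q1,r1,j) := ∑_{q∈ℤ[i]} exp(−π N(q)/(2Q0)) · e(Re(j r1 q² / q1²)). Let K denote the maximum, over q1 ∈ ℤ[i] with Q0/√2 < N(q1) ≤ Q0 and reduced residues r1 mod q1² with (r1,q1)=1, of the number of pairs (q2, r2) with q2 ∈ ℤ[i], Q0/√2 < N(q2) ≤ Q0, r2 a reduced residue mod q2² with (r2,q2)=1, and N(r1 q2² − r2 q1²) ≤ 2 N^{−1} N(q1)² N(q2)². Then K ≤ C·( Q0³/N + (Q0²/N) · max_{Q0/√2 < N(q1) ≤ Q0, (r1,q1)=1} ∑_{j∈ℤ[i]\{0}} exp(−2π N(j) Q0²/N) · |S(q1,r1,j)| ) for an absolute constant C. -/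

import Mathlib

noncomputable section

/-- `e(t) = exp(2πit)`. -/
def e (t : ℝ) : ℂ := Complex.exp (2 * Real.pi * Complex.I * t)

/-- The norm of a Gaussian integer, as a real number. -/
def gN (z : GaussianInt) : ℝ := (z.re : ℝ) ^ 2 + (z.im : ℝ) ^ 2

/-- The smoothed quadratic Gauss-type sum
`S(q₁,r₁,j) = ∑_{q ∈ ℤ[i]} exp(-π N(q)/(2Q₀)) e(Re(j r₁ q²/q₁²))`. -/
def Ssum (Q0 : ℝ) (q1 r1 j : GaussianInt) : ℂ :=
  ∑' q : GaussianInt,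
    ((Real.exp (-Real.pi * gN q / (2 * Q0)) : ℝ) : ℂ)
      * e (((j : ℂ) * (r1 : ℂ) * (q : ℂ) ^ 2 / (q1 : ℂ) ^ 2).re)

open Real

def gE : GaussianInt ≃ ℤ × ℤ where
  toFun z := (z.re, z.im)
  invFun p := ⟨p.1, p.2⟩
  left_inv _ := rfl
  right_inv _ := rfl

def gEc : GaussianInt ≃ ℤ × ℤ where
  toFun z := (z.re, -z.im)
  invFun p := ⟨p.1, -p.2⟩
  left_inv z := by cases z; simp
  right_inv p := by cases p; simp

theorem summ1 {c : ℝ} (hc : 0 < c) (x : ℝ) :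
    Summable (fun n : ℤ => Real.exp (-c * ((n : ℝ) - x) ^ 2)) := by
  have h := ((summable_jacobiTheta₂_term_iff (-(Complex.I * (c * x / π : ℝ))) (Complex.I * (c / π : ℝ))).2
    (by simp; positivity)).norm
  simp only [norm_jacobiTheta₂_term] at h
  refine (h.mul_left (Real.exp (-c * x ^ 2))).congr fun n => ?_
  rw [← Real.exp_add]
  congr 1
  simp
  field_simp
  ring

theorem summ10 {c : ℝ} (hc : 0 < c) :
    Summable (fun n : ℤ => Real.exp (-c * (n : ℝ) ^ 2)) := by
  simpa using summ1 hc 0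

theorem norm_e (t : ℝ) : ‖e t‖ = 1 := by
  unfold e
  rw [show (2 * Real.pi * Complex.I * t : ℂ) = ((2 * π * t : ℝ) : ℂ) * Complex.I by push_cast; ring]
  exact Complex.norm_exp_ofReal_mul_I _

theorem e_add (s t : ℝ) : e (s + t) = e s * e t := by
  unfold e
  rw [← Complex.exp_add]; congr 1; push_cast; ring

theorem poisson1 {A : ℝ} (hA : 0 < A) (x : ℝ) :
    ((∑' n : ℤ, Real.exp (-(π / A) * ((n : ℝ) - x) ^ 2) : ℝ) : ℂ)
      = (Real.sqrt A : ℂ) * ∑' n : ℤ, ((Real.exp (-(π * A) * (n : ℝ) ^ 2) : ℝ) : ℂ) * e (n * x) := by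
  have h := Complex.tsum_exp_neg_quadratic (a := (A : ℂ)) (by simpa using hA) (Complex.I * x)
  have h1 : (∑' n : ℤ, ((Real.exp (-(π * A) * (n : ℝ) ^ 2) : ℝ) : ℂ) * e (n * x))
      = ∑' n : ℤ, Complex.exp (-π * A * n ^ 2 + 2 * π * (Complex.I * x) * n) := by
    refine tsum_congr fun n => ?_
    unfold e
    rw [Complex.ofReal_exp, ← Complex.exp_add]
    congr 1; push_cast; ring
  have h2 : ((∑' n : ℤ, Real.exp (-(π / A) * ((n : ℝ) - x) ^ 2) : ℝ) : ℂ)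
      = ∑' n : ℤ, Complex.exp (-π / A * (n + Complex.I * (Complex.I * x)) ^ 2) := by
    rw [Complex.ofReal_tsum]
    refine tsum_congr fun n => ?_
    rw [Complex.ofReal_exp]
    congr 1; rw [← mul_assoc, Complex.I_mul_I]; push_cast; ring
  have h3 : (A : ℂ) ^ (1 / 2 : ℂ) = (Real.sqrt A : ℂ) := by
    rw [Real.sqrt_eq_rpow, Complex.ofReal_cpow hA.le]; norm_num
  have h4 : (Real.sqrt A : ℂ) ≠ 0 := by
    exact_mod_cast (Real.sqrt_pos.2 hA).ne'
  rw [h1, h2, h, h3, ← mul_assoc (√A : ℂ), mul_one_div, div_self h4, one_mul]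

theorem gsumm {c : ℝ} (hc : 0 < c) (a b : ℝ) :
    Summable (fun p : ℤ × ℤ => Real.exp (-c * ((p.1 : ℝ) - a) ^ 2) * Real.exp (-c * ((p.2 : ℝ) - b) ^ 2)) :=
  (summ1 hc a).mul_of_nonneg (summ1 hc b) (fun _ => (Real.exp_pos _).le) (fun _ => (Real.exp_pos _).le)

theorem gterm (c : ℝ) (α : ℂ) (m : GaussianInt) :
    Real.exp (-c * Complex.normSq (α - m)) =
     Real.exp (-c * (((gE m).1 : ℝ) - α.re) ^ 2) * Real.exp (-c * (((gE m).2 : ℝ) - α.im) ^ 2) := by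
  rw [← Real.exp_add]; congr 1
  simp [Complex.normSq_apply, gE]
  ring

theorem gsummα {c : ℝ} (hc : 0 < c) (α : ℂ) :
    Summable (fun m : GaussianInt => Real.exp (-c * Complex.normSq (α - m))) := by
  simp only [gterm]
  exact gE.summable_iff.2 (gsumm hc α.re α.im)

theorem gN_eq (z : GaussianInt) : gN z = Complex.normSq (z : ℂ) := by
  simp [gN, Complex.normSq_apply]; ring

theorem gsumm0 {c : ℝ} (hc : 0 < c) :
    Summable (fun m : GaussianInt => Real.exp (-c * gN m)) := by
  refine (gsummα hc 0).congr fun m => ?_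
  rw [gN_eq]; simp

theorem tsum_gα {c : ℝ} (hc : 0 < c) (α : ℂ) :
    ∑' m : GaussianInt, Real.exp (-c * Complex.normSq (α - m)) =
      (∑' n : ℤ, Real.exp (-c * ((n : ℝ) - α.re) ^ 2)) * ∑' n : ℤ, Real.exp (-c * ((n : ℝ) - α.im) ^ 2) := by
  rw [(summ1 hc α.re).tsum_mul_tsum (summ1 hc α.im) (gsumm hc _ _), ← gE.tsum_eq]
  exact tsum_congr fun m => gterm c α m

theorem poisson2 {A : ℝ} (hA : 0 < A) (α : ℂ) :
    ((∑' m : GaussianInt, Real.exp (-(π / A) * Complex.normSq (α - m)) : ℝ) : ℂ)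
      = (A : ℂ) * ∑' j : GaussianInt, ((Real.exp (-(π * A) * gN j) : ℝ) : ℂ) * e (((j : ℂ) * α).re) := by
  have hs : ∀ x : ℝ, Summable fun n : ℤ => ‖((Real.exp (-(π * A) * (n : ℝ) ^ 2) : ℝ) : ℂ) * e (n * x)‖ := by
    intro x
    refine (summ10 (c := π * A) (by positivity)).congr fun n => ?_
    rw [norm_mul, norm_e, mul_one, Complex.norm_real, Real.norm_of_nonneg (Real.exp_pos _).le]
  rw [tsum_gα (by positivity), Complex.ofReal_mul, poisson1 hA, poisson1 hA, mul_mul_mul_comm,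
    ← Complex.ofReal_mul, Real.mul_self_sqrt hA.le, tsum_mul_tsum_of_summable_norm (hs _) (hs _),
    ← gEc.tsum_eq]
  congr 1
  refine tsum_congr fun j => ?_
  rw [mul_mul_mul_comm, ← Complex.ofReal_mul, ← Real.exp_add, ← e_add]
  congr 2
  · congr 2; simp [gEc, gN]; ring
  · simp [gEc]; ring

def c0 : ℝ := ∑' n : ℤ, Real.exp (-π * (n : ℝ) ^ 2)

theorem theta_bound {B : ℝ} (hB : 1 ≤ B) :
    ∑' n : ℤ, Real.exp (-(π / B) * ((n : ℝ) - 0) ^ 2) ≤ Real.sqrt B * c0 := by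
  have h := congrArg norm (poisson1 (A := B) (by linarith) 0)
  rw [Complex.norm_real, Real.norm_of_nonneg (tsum_nonneg fun _ => (Real.exp_pos _).le)] at h
  rw [h, norm_mul, Complex.norm_real, Real.norm_of_nonneg (Real.sqrt_nonneg _)]
  gcongr
  have hn : ∀ n : ℤ, ‖((Real.exp (-(π * B) * (n : ℝ) ^ 2) : ℝ) : ℂ) * e (n * 0)‖ = Real.exp (-(π * B) * (n : ℝ) ^ 2) := by
    intro n
    rw [norm_mul, norm_e, mul_one, Complex.norm_real, Real.norm_of_nonneg (Real.exp_pos _).le]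
  have hS := summ10 (c := π * B) (by positivity)
  refine (norm_tsum_le_tsum_norm (hS.congr fun n => (hn n).symm)).trans ?_
  simp only [hn]
  refine hS.tsum_le_tsum (fun n => ?_) (summ10 Real.pi_pos)
  apply Real.exp_le_exp.2
  have : 0 ≤ π * (n : ℝ) ^ 2 := by positivity
  nlinarith

theorem S0_bound {Q0 : ℝ} (hQ : 1 ≤ Q0) :
    ∑' q : GaussianInt, Real.exp (-(π / (2 * Q0)) * gN q) ≤ 2 * Q0 * c0 ^ 2 := by
  have h := tsum_gα (c := π / (2 * Q0)) (by positivity) 0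
  have h2 := theta_bound (B := 2 * Q0) (by linarith)
  have h3 : ∑' q : GaussianInt, Real.exp (-(π / (2 * Q0)) * gN q) =
      ∑' m : GaussianInt, Real.exp (-(π / (2 * Q0)) * Complex.normSq (0 - m)) :=
    tsum_congr fun q => by rw [gN_eq]; simp
  rw [h3, h]
  have h0 : 0 ≤ ∑' n : ℤ, Real.exp (-(π / (2 * Q0)) * ((n : ℝ) - 0) ^ 2) :=
    tsum_nonneg fun _ => (Real.exp_pos _).le
  calc _ ≤ (Real.sqrt (2 * Q0) * c0) * (Real.sqrt (2 * Q0) * c0) := by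
        simp only [Complex.zero_re, Complex.zero_im]
        exact mul_le_mul h2 h2 h0 (h0.trans h2)
    _ = _ := by
        rw [mul_mul_mul_comm, Real.mul_self_sqrt (by linarith)]; ring

theorem Ssum_norm_le {Q0 : ℝ} (hQ : 1 ≤ Q0) (q1 r1 j : GaussianInt) :
    ‖Ssum Q0 q1 r1 j‖ ≤ 2 * Q0 * c0 ^ 2 := by
  refine le_trans ?_ (S0_bound hQ)
  unfold Ssum
  have hn : ∀ q : GaussianInt, ‖((Real.exp (-Real.pi * gN q / (2 * Q0)) : ℝ) : ℂ)
      * e (((j : ℂ) * (r1 : ℂ) * (q : ℂ) ^ 2 / (q1 : ℂ) ^ 2).re)‖ = Real.exp (-(π / (2 * Q0)) * gN q) := by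
    intro q
    rw [norm_mul, norm_e, mul_one, Complex.norm_real, Real.norm_of_nonneg (Real.exp_pos _).le]
    congr 1; ring
  have hS := gsumm0 (c := π / (2 * Q0)) (by positivity)
  refine (norm_tsum_le_tsum_norm (hS.congr fun n => (hn n).symm)).trans ?_
  simp only [hn]; exact le_rfl

/-- Smoothed count. -/
def Fc (Q0 A : ℝ) (q1 r1 : GaussianInt) (p : GaussianInt × GaussianInt) : ℝ :=
  Real.exp (-(π / (2 * Q0)) * gN p.1) *
    Real.exp (-(π / A) * Complex.normSq ((r1 : ℂ) * (p.1 : ℂ) ^ 2 / (q1 : ℂ) ^ 2 - p.2))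

theorem inner_eq {A : ℝ} (hA : 0 < A) (Q0 : ℝ) (q1 r1 q : GaussianInt) :
    ((∑' m : GaussianInt, Fc Q0 A q1 r1 (q, m) : ℝ) : ℂ) = (A : ℂ) * ∑' j : GaussianInt,
      ((Real.exp (-(π / (2 * Q0)) * gN q) : ℝ) : ℂ) * (((Real.exp (-(π * A) * gN j) : ℝ) : ℂ) *
        e (((j : ℂ) * (r1 : ℂ) * (q : ℂ) ^ 2 / (q1 : ℂ) ^ 2).re)) := by
  simp only [Fc]
  rw [tsum_mul_left (α := ℝ), Complex.ofReal_mul, poisson2 hA, tsum_mul_left, mul_left_comm]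
  refine congrArg _ (congrArg _ (tsum_congr fun j => ?_))
  rw [mul_assoc (j : ℂ), mul_div_assoc (j : ℂ)]

theorem dsumm {A Q0 : ℝ} (hA : 0 < A) (hQ : 1 ≤ Q0) (q1 r1 : GaussianInt) :
    Summable (fun p : GaussianInt × GaussianInt =>
      ((Real.exp (-(π / (2 * Q0)) * gN p.1) : ℝ) : ℂ) * (((Real.exp (-(π * A) * gN p.2) : ℝ) : ℂ) *
        e (((p.2 : ℂ) * (r1 : ℂ) * (p.1 : ℂ) ^ 2 / (q1 : ℂ) ^ 2).re))) := by
  have hS := (gsumm0 (c := π / (2 * Q0)) (by positivity)).mul_of_nonneg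
    (gsumm0 (c := π * A) (by positivity)) (fun _ => (Real.exp_pos _).le) (fun _ => (Real.exp_pos _).le)
  refine Summable.of_norm (hS.congr fun p => ?_)
  rw [norm_mul, norm_mul, norm_e, mul_one, Complex.norm_real, Complex.norm_real,
    Real.norm_of_nonneg (Real.exp_pos _).le, Real.norm_of_nonneg (Real.exp_pos _).le]

theorem Fc_summable {A Q0 : ℝ} (hA : 0 < A) (hQ : 1 ≤ Q0) (q1 r1 : GaussianInt) :
    Summable (Fc Q0 A q1 r1) := by
  refine (summable_prod_of_nonneg (fun p => by unfold Fc; positivity)).2 ⟨fun q => ?_, ?_⟩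
  · simp only [Fc]
    exact (gsummα (c := π / A) (by positivity) _).mul_left _
  · have h := ((dsumm hA hQ q1 r1).prod).mul_left (A : ℂ)
    rw [← Complex.summable_ofReal]
    exact h.congr fun q => (inner_eq hA Q0 q1 r1 q).symm

theorem Fc_tsum {A Q0 : ℝ} (hA : 0 < A) (hQ : 1 ≤ Q0) (q1 r1 : GaussianInt) :
    ((∑' p, Fc Q0 A q1 r1 p : ℝ) : ℂ) =
      A * ∑' j : GaussianInt, ((Real.exp (-(π * A) * gN j) : ℝ) : ℂ) * Ssum Q0 q1 r1 j := by
  have hd := dsumm hA hQ q1 r1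
  rw [(Fc_summable hA hQ q1 r1).tsum_prod, Complex.ofReal_tsum]
  simp only [inner_eq hA]
  rw [tsum_mul_left]
  refine congrArg _ ?_
  refine Eq.trans (Summable.tsum_comm (f := fun q j : GaussianInt =>
    ((Real.exp (-(π / (2 * Q0)) * gN q) : ℝ) : ℂ) * (((Real.exp (-(π * A) * gN j) : ℝ) : ℂ) *
        e (((j : ℂ) * (r1 : ℂ) * (q : ℂ) ^ 2 / (q1 : ℂ) ^ 2).re))) hd).symm ?_
  refine tsum_congr fun j => ?_
  rw [Ssum, ← tsum_mul_left]
  refine tsum_congr fun q => ?_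
  have hE : -Real.pi * gN q / (2 * Q0) = -(π / (2 * Q0)) * gN q := by ring
  rw [mul_left_comm, hE]

theorem Vsumm {A Q0 : ℝ} (hA : 0 < A) (hQ : 1 ≤ Q0) (q1 r1 : GaussianInt) :
    Summable (fun j : GaussianInt => Real.exp (-(π * A) * gN j) * ‖Ssum Q0 q1 r1 j‖) := by
  refine Summable.of_nonneg_of_le (fun j => by positivity) (fun j => ?_)
    ((gsumm0 (c := π * A) (by positivity)).mul_right (2 * Q0 * c0 ^ 2))
  exact mul_le_mul_of_nonneg_left (Ssum_norm_le hQ _ _ _) (Real.exp_pos _).le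

theorem Fc_bound {A Q0 : ℝ} (hA : 0 < A) (hQ : 1 ≤ Q0) (q1 r1 : GaussianInt) :
    ∑' p, Fc Q0 A q1 r1 p ≤ A * (2 * Q0 * c0 ^ 2 +
      ∑' j : {j : GaussianInt // j ≠ 0}, Real.exp (-(π * A) * gN (j : GaussianInt)) * ‖Ssum Q0 q1 r1 j‖) := by
  have h := congrArg norm (Fc_tsum hA hQ q1 r1)
  have hV := Vsumm hA hQ q1 r1
  rw [Complex.norm_real, Real.norm_of_nonneg (tsum_nonneg fun p => by unfold Fc; positivity),
    norm_mul, Complex.norm_real, Real.norm_of_nonneg hA.le] at h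
  rw [h]
  gcongr
  have hn : ∀ j : GaussianInt, ‖((Real.exp (-(π * A) * gN j) : ℝ) : ℂ) * Ssum Q0 q1 r1 j‖ =
      Real.exp (-(π * A) * gN j) * ‖Ssum Q0 q1 r1 j‖ := by
    intro j
    rw [norm_mul, Complex.norm_real, Real.norm_of_nonneg (Real.exp_pos _).le]
  refine (norm_tsum_le_tsum_norm (hV.congr fun n => (hn n).symm)).trans ?_
  simp only [hn]
  have hsplit := hV.tsum_subtype_add_tsum_subtype_compl {(0 : GaussianInt)}
  rw [← hsplit, tsum_singleton (0 : GaussianInt) (fun j => Real.exp (-(π * A) * gN j) * ‖Ssum Q0 q1 r1 j‖)]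
  refine add_le_add ?_ (le_of_eq rfl)
  rw [show gN 0 = 0 by simp [gN]]
  simpa using Ssum_norm_le hQ q1 r1 0

theorem count_bound {N Q0 : ℝ} (hN : 1 ≤ N) (hQ : 1 ≤ Q0)
    (rep : (q : GaussianInt) → (GaussianInt ⧸ Ideal.span {q ^ 2})ˣ → GaussianInt)
    (hrep : ∀ (q : GaussianInt) (u : (GaussianInt ⧸ Ideal.span {q ^ 2})ˣ),
        Ideal.Quotient.mk (Ideal.span {q ^ 2}) (rep q u)
          = (u : GaussianInt ⧸ Ideal.span {q ^ 2}))
    (q1 r1 : GaussianInt) (hq1 : 0 < gN q1) :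
    (Nat.card {p : Σ q2 : GaussianInt, (GaussianInt ⧸ Ideal.span {q2 ^ 2})ˣ //
                    Q0 / Real.sqrt 2 < gN p.1 ∧ gN p.1 ≤ Q0 ∧
                    gN (r1 * p.1 ^ 2 - rep p.1 p.2 * q1 ^ 2)
                      ≤ 2 * N⁻¹ * (gN q1) ^ 2 * (gN p.1) ^ 2} : ℝ)
      ≤ Real.exp (2 * π) * ∑' p, Fc Q0 (2 * Q0 ^ 2 / N) q1 r1 p := by
  set A : ℝ := 2 * Q0 ^ 2 / N with hAdef
  have hA : 0 < A := by positivity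
  set T := {p : Σ q2 : GaussianInt, (GaussianInt ⧸ Ideal.span {q2 ^ 2})ˣ //
                    Q0 / Real.sqrt 2 < gN p.1 ∧ gN p.1 ≤ Q0 ∧
                    gN (r1 * p.1 ^ 2 - rep p.1 p.2 * q1 ^ 2)
                      ≤ 2 * N⁻¹ * (gN q1) ^ 2 * (gN p.1) ^ 2} with hT
  have hF0 : ∀ p, 0 ≤ Fc Q0 A q1 r1 p := fun p => by unfold Fc; positivity
  have hFs := Fc_summable hA hQ q1 r1
  rcases finite_or_infinite T with hfin | hinf
  swap
  · rw [Nat.card_eq_zero_of_infinite]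
    simp only [Nat.cast_zero]
    exact mul_nonneg (Real.exp_pos _).le (tsum_nonneg hF0)
  have := Fintype.ofFinite T
  let f : T → GaussianInt × GaussianInt := fun p => (p.1.1, rep p.1.1 p.1.2)
  have hf : Function.Injective f := by
    rintro ⟨⟨q, u⟩, h⟩ ⟨⟨q', u'⟩, h'⟩ hh
    simp only [f, Prod.mk.injEq] at hh
    obtain ⟨rfl, h2⟩ := hh
    have : u = u' := by
      ext; rw [← hrep, ← hrep, h2]
    subst this; rfl
  have hpt : ∀ p : T, 1 ≤ Real.exp (2 * π) * Fc Q0 A q1 r1 (f p) := by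
    rintro ⟨⟨q, u⟩, -, h1, h2⟩
    simp only [f] at *
    unfold Fc
    rw [← Real.exp_add, ← Real.exp_add]
    apply Real.one_le_exp
    have hq : (q1 : ℂ) ≠ 0 := by
      intro h0; rw [gN_eq, h0] at hq1; simp at hq1
    have hqn : (0 : ℝ) ≤ gN q := by unfold gN; positivity
    have e1 : Complex.normSq ((r1 : ℂ) * (q : ℂ) ^ 2 / (q1 : ℂ) ^ 2 - (rep q u : GaussianInt)) =
        gN (r1 * q ^ 2 - rep q u * q1 ^ 2) / (gN q1) ^ 2 := by
      rw [gN_eq, gN_eq, ← map_pow Complex.normSq, ← Complex.normSq_div]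
      congr 1
      rw [map_sub, map_mul, map_mul, map_pow, map_pow]
      field_simp
    have e2 : Complex.normSq ((r1 : ℂ) * (q : ℂ) ^ 2 / (q1 : ℂ) ^ 2 - (rep q u : GaussianInt)) ≤ A := by
      rw [e1, div_le_iff₀ (by positivity)]
      refine h2.trans ?_
      have : (gN q) ^ 2 ≤ Q0 ^ 2 := by gcongr
      rw [hAdef]
      calc 2 * N⁻¹ * gN q1 ^ 2 * gN q ^ 2 ≤ 2 * N⁻¹ * gN q1 ^ 2 * Q0 ^ 2 := by gcongr
        _ = _ := by field_simp
    have e3 : π / A * Complex.normSq ((r1 : ℂ) * (q : ℂ) ^ 2 / (q1 : ℂ) ^ 2 - (rep q u : GaussianInt)) ≤ π := by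
      calc _ ≤ π / A * A := by gcongr
        _ = π := by field_simp
    have e4 : π / (2 * Q0) * gN q ≤ π := by
      calc _ ≤ π / (2 * Q0) * (2 * Q0) := by gcongr; linarith
        _ = π := by field_simp
    linarith
  rw [Nat.card_eq_fintype_card]
  calc (Fintype.card T : ℝ) = ∑ p : T, (1 : ℝ) := by simp
    _ ≤ ∑ p : T, Real.exp (2 * π) * Fc Q0 A q1 r1 (f p) := Finset.sum_le_sum fun p _ => hpt p
    _ = Real.exp (2 * π) * ∑ p ∈ Finset.univ.map ⟨f, hf⟩, Fc Q0 A q1 r1 p := by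
        rw [← Finset.mul_sum, Finset.sum_map]; rfl
    _ ≤ _ := by
        gcongr
        exact hFs.sum_le_tsum _ fun p _ => hF0 p

/-- **Reduction of the counting quantity for square moduli to exponential sums**
(inequality (17) of the paper). There is an absolute constant `C` such that for all
`N, Q₀ ≥ 1` and any fixed system `rep` of representatives of invertible residues mod `q²`:
`K ≤ C (Q₀³/N + (Q₀²/N) max_{q₁,r₁} ∑_{j ≠ 0} exp(-2π N(j) Q₀²/N) |S(q₁,r₁,j)|)`. -/
theorem counting_square_moduli_reduction :
    ∃ C : ℝ, 0 < C ∧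
      ∀ (N Q0 : ℝ), 1 ≤ N → 1 ≤ Q0 →
      ∀ rep : (q : GaussianInt) → (GaussianInt ⧸ Ideal.span {q ^ 2})ˣ → GaussianInt,
      (∀ (q : GaussianInt) (u : (GaussianInt ⧸ Ideal.span {q ^ 2})ˣ),
        Ideal.Quotient.mk (Ideal.span {q ^ 2}) (rep q u)
          = (u : GaussianInt ⧸ Ideal.span {q ^ 2})) →
      ∀ K : ℕ,
      K = sSup {m : ℕ | ∃ q1 : GaussianInt,
            (Q0 / Real.sqrt 2 < gN q1 ∧ gN q1 ≤ Q0) ∧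
            ∃ u1 : (GaussianInt ⧸ Ideal.span {q1 ^ 2})ˣ,
              m = Nat.card {p : Σ q2 : GaussianInt, (GaussianInt ⧸ Ideal.span {q2 ^ 2})ˣ //
                    Q0 / Real.sqrt 2 < gN p.1 ∧ gN p.1 ≤ Q0 ∧
                    gN (rep q1 u1 * p.1 ^ 2 - rep p.1 p.2 * q1 ^ 2)
                      ≤ 2 * N⁻¹ * (gN q1) ^ 2 * (gN p.1) ^ 2}} →
      (K : ℝ) ≤ C * (Q0 ^ 3 / N + (Q0 ^ 2 / N) *
        sSup {v : ℝ | ∃ q1 : GaussianInt,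
          (Q0 / Real.sqrt 2 < gN q1 ∧ gN q1 ≤ Q0) ∧
          ∃ u1 : (GaussianInt ⧸ Ideal.span {q1 ^ 2})ˣ,
            v = ∑' j : {j : GaussianInt // j ≠ 0},
              Real.exp (-(2 * Real.pi) * gN (j : GaussianInt) * Q0 ^ 2 / N)
                * ‖Ssum Q0 q1 (rep q1 u1) (j : GaussianInt)‖}) := by
  refine ⟨Real.exp (2 * π) * (4 * c0 ^ 2 + 2), by positivity, ?_⟩
  intro N Q0 hN hQ rep hrep K hK
  set SV := {v : ℝ | ∃ q1 : GaussianInt,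
          (Q0 / Real.sqrt 2 < gN q1 ∧ gN q1 ≤ Q0) ∧
          ∃ u1 : (GaussianInt ⧸ Ideal.span {q1 ^ 2})ˣ,
            v = ∑' j : {j : GaussianInt // j ≠ 0},
              Real.exp (-(2 * Real.pi) * gN (j : GaussianInt) * Q0 ^ 2 / N)
                * ‖Ssum Q0 q1 (rep q1 u1) (j : GaussianInt)‖} with hSV
  have hA : 0 < 2 * Q0 ^ 2 / N := by positivity
  have hexp : ∀ j : GaussianInt, Real.exp (-(2 * Real.pi) * gN j * Q0 ^ 2 / N)
      = Real.exp (-(π * (2 * Q0 ^ 2 / N)) * gN j) := by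
    intro j; congr 1; ring
  have hSV0 : 0 ≤ sSup SV := by
    apply Real.sSup_nonneg
    rintro v ⟨q1, -, u1, rfl⟩
    exact tsum_nonneg fun j => by positivity
  have hSVb : BddAbove SV := by
    refine ⟨∑' j : {j : GaussianInt // j ≠ 0},
      Real.exp (-(π * (2 * Q0 ^ 2 / N)) * gN (j : GaussianInt)) * (2 * Q0 * c0 ^ 2), ?_⟩
    rintro v ⟨q1, -, u1, rfl⟩
    simp only [hexp]
    refine Summable.tsum_le_tsum (fun j => ?_) ((Vsumm hA hQ q1 (rep q1 u1)).subtype _)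
      (((gsumm0 (c := π * (2 * Q0 ^ 2 / N)) (by positivity)).mul_right (2 * Q0 * c0 ^ 2)).subtype _)
    exact mul_le_mul_of_nonneg_left (Ssum_norm_le hQ _ _ _) (Real.exp_pos _).le
  have hRHS : 0 ≤ Real.exp (2 * π) * (4 * c0 ^ 2 + 2) * (Q0 ^ 3 / N + (Q0 ^ 2 / N) * sSup SV) := by
    positivity
  set SK := {m : ℕ | ∃ q1 : GaussianInt,
            (Q0 / Real.sqrt 2 < gN q1 ∧ gN q1 ≤ Q0) ∧
            ∃ u1 : (GaussianInt ⧸ Ideal.span {q1 ^ 2})ˣ,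
              m = Nat.card {p : Σ q2 : GaussianInt, (GaussianInt ⧸ Ideal.span {q2 ^ 2})ˣ //
                    Q0 / Real.sqrt 2 < gN p.1 ∧ gN p.1 ≤ Q0 ∧
                    gN (rep q1 u1 * p.1 ^ 2 - rep p.1 p.2 * q1 ^ 2)
                      ≤ 2 * N⁻¹ * (gN q1) ^ 2 * (gN p.1) ^ 2}} with hSK
  by_cases hne : SK.Nonempty
  swap
  · rw [Set.not_nonempty_iff_eq_empty] at hne
    rw [hK, hne]; simpa using hRHS
  by_cases hb : BddAbove SK
  swap
  · rw [hK, Nat.sSup_of_not_bddAbove hb]; simpa using hRHS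
  have hmem := Nat.sSup_mem hne hb
  rw [← hK] at hmem
  obtain ⟨q1, hq, u1, hm⟩ := hmem
  have hq1 : 0 < gN q1 := lt_of_le_of_lt (by positivity) hq.1
  have h1 := count_bound hN hQ rep hrep q1 (rep q1 u1) hq1
  rw [← hm] at h1
  have h2 := Fc_bound hA hQ q1 (rep q1 u1)
  have h3 : ∑' j : {j : GaussianInt // j ≠ 0}, Real.exp (-(π * (2 * Q0 ^ 2 / N)) * gN (j : GaussianInt))
      * ‖Ssum Q0 q1 (rep q1 u1) j‖ ≤ sSup SV := by
    apply le_csSup hSVb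
    exact ⟨q1, hq, u1, by simp only [hexp]⟩
  calc (K : ℝ) ≤ _ := h1
    _ ≤ Real.exp (2 * π) * (2 * Q0 ^ 2 / N * (2 * Q0 * c0 ^ 2 + sSup SV)) := by
        gcongr
        exact h2.trans (by gcongr)
    _ = Real.exp (2 * π) * (4 * c0 ^ 2 * (Q0 ^ 3 / N) + 2 * (Q0 ^ 2 / N * sSup SV)) := by ring
    _ ≤ Real.exp (2 * π) * ((4 * c0 ^ 2 + 2) * (Q0 ^ 3 / N) + (4 * c0 ^ 2 + 2) * (Q0 ^ 2 / N * sSup SV)) := by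
        gcongr
        · linarith
        · nlinarith [sq_nonneg c0]
    _ = _ := by ring
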